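/- Let G and G' be two finitely generated virtually free groups. Suppose that G is rigid and that G and G' are ∀∃-equivalent. Then there exists an injective group homomorphism from G into G'. -/

import Mathlib

open FirstOrder Language

/-- Function symbols of the first-order language of groups:
a binary multiplication, a unary inverse and a constant for the identity. -/
inductive GroupFunc : ℕ → Type
  | mul : GroupFunc 2
  | inv : GroupFunc 1
  | one : GroupFunc 0

/-- The first-order language of groups. -/
def groupLang : FirstOrder.Language :=
  { Functions := GroupFunc
    Relations := fun _ => Empty }

/-- Every group is a structure for the language of groups in the natural way. -/
instance groupLangStructure (G : Type*) [Group G] : groupLang.Structure G where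
  funMap {n} f v :=
    match f with
    | .mul => v 0 * v 1
    | .inv => (v 0)⁻¹
    | .one => 1
  RelMap {n} r _ := r.elim

/-- Existential formulas: iterated existential quantifications of a
quantifier-free formula. -/
inductive IsExistentialQF {α : Type*} : ∀ {n : ℕ}, groupLang.BoundedFormula α n → Prop
  | of_isQF {n : ℕ} {φ : groupLang.BoundedFormula α n} (h : φ.IsQF) : IsExistentialQF φ
  | ex {n : ℕ} {φ : groupLang.BoundedFormula α (n + 1)} (h : IsExistentialQF φ) :
      IsExistentialQF φ.ex

/-- Universal formulas: iterated universal quantifications of a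
quantifier-free formula. -/
inductive IsUniversalQF {α : Type*} : ∀ {n : ℕ}, groupLang.BoundedFormula α n → Prop
  | of_isQF {n : ℕ} {φ : groupLang.BoundedFormula α n} (h : φ.IsQF) : IsUniversalQF φ
  | all {n : ℕ} {φ : groupLang.BoundedFormula α (n + 1)} (h : IsUniversalQF φ) :
      IsUniversalQF φ.all

/-- ∀∃-formulas: iterated universal quantifications of an existential formula. -/
inductive IsAE {α : Type*} : ∀ {n : ℕ}, groupLang.BoundedFormula α n → Prop
  | of_existential {n : ℕ} {φ : groupLang.BoundedFormula α n} (h : IsExistentialQF φ) : IsAE φ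
  | all {n : ℕ} {φ : groupLang.BoundedFormula α (n + 1)} (h : IsAE φ) : IsAE φ.all

/-- A group is virtually free if it has a free subgroup of finite index. -/
def VirtuallyFree (G : Type*) [Group G] : Prop :=
  ∃ H : Subgroup G, H.FiniteIndex ∧ Nonempty (IsFreeGroup H)

/-- A group is co-Hopfian if every injective endomorphism is surjective. -/
def CoHopfian (G : Type*) [Group G] : Prop :=
  ∀ φ : G →* G, Function.Injective φ → Function.Surjective φ

/-- Two homomorphisms `φ, φ' : G → G'` are equivalent if they coincide up to
conjugation on every finite subgroup of `G`. -/
def HomEquiv {G G' : Type*} [Group G] [Group G'] (φ φ' : G →* G') : Prop :=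
  ∀ H : Subgroup G, (H : Set G).Finite →
    ∃ g' : G', ∀ h ∈ H, φ' h = g' * φ h * g'⁻¹

/-- Two groups are ∀∃-equivalent if they satisfy the same ∀∃-sentences. -/
def AEEquivalent (G : Type*) (G' : Type*) [Group G] [Group G'] : Prop :=
  ∀ φ : groupLang.Sentence, IsAE φ → (G ⊨ φ ↔ G' ⊨ φ)

/-- Two groups are ∃-equivalent if they satisfy the same existential sentences. -/
def ExistentiallyEquivalent (G : Type*) (G' : Type*) [Group G] [Group G'] : Prop :=
  ∀ φ : groupLang.Sentence, IsExistentialQF φ → (G ⊨ φ ↔ G' ⊨ φ)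

/-- An endomorphism is rigid-testing: `G` is rigid if every endomorphism
equivalent to the identity is an automorphism. -/
def Rigid (G : Type*) [Group G] : Prop :=
  ∀ φ : G →* G, HomEquiv φ (MonoidHom.id G) → Function.Bijective φ

/-- `Out G` is finite, expressed as: the inner automorphisms form a finite index
subgroup of `Aut G`. -/
def OutFinite (G : Type*) [Group G] : Prop :=
  (MulAut.conj : G →* MulAut G).range.FiniteIndex

/-- Iterated composition of an endomorphism. -/
def homPow {G : Type*} [Group G] (φ : G →* G) : ℕ → (G →* G)
  | 0 => MonoidHom.id G
  | n + 1 => φ.comp (homPow φ n)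

/-- An endomorphism `φ` of `G` is class-permuting if some positive power of `φ`
is equivalent to the identity of `G`. -/
def ClassPermuting {G : Type*} [Group G] (φ : G →* G) : Prop :=
  ∃ n : ℕ, 1 ≤ n ∧ HomEquiv (homPow φ n) (MonoidHom.id G)

/-- A maximal finite subgroup: a finite subgroup maximal with respect to
inclusion among finite subgroups. -/
def MaximalFiniteSubgroup {G : Type*} [Group G] (A : Subgroup G) : Prop :=
  (A : Set G).Finite ∧ ∀ B : Subgroup G, (B : Set G).Finite → A ≤ B → A = B

/-- Two subgroups are conjugate. -/
def SubgroupConj {G : Type*} [Group G] (A B : Subgroup G) : Prop :=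
  ∃ g : G, B = A.map (MulAut.conj g).toMonoidHom

/-- A group is strongly co-Hopfian if there is a finite subset `F` of
`G \ {1}` such that every endomorphism whose kernel misses `F` is an
automorphism. -/
def StronglyCoHopfian (G : Type*) [Group G] : Prop :=
  ∃ F : Finset G, (1 : G) ∉ F ∧
    ∀ φ : G →* G, (∀ f ∈ F, φ f ≠ 1) → Function.Bijective φ

/-- A group is finitely presented. -/
def GroupFinitelyPresented (G : Type*) [Group G] : Prop :=
  ∃ (n : ℕ) (rels : Finset (FreeGroup (Fin n))),
    Nonempty (PresentedGroup (rels : Set (FreeGroup (Fin n))) ≃* G)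

/-!
The existence of a homomorphism `G → G'` that keeps finitely many pairs of non-conjugate tuples
non-conjugate is, for finitely presented `G`, the negation of a `∀∃`-sentence that is false in `G`.
Since `G` has finitely many conjugacy classes of finite subgroups, there are finitely many
homomorphisms from finite subgroups to `G` up to conjugacy, so some `φ : G → G'` is injective on
their classes, and some `ψ : G' → G` is injective on the images of these classes. Then `ψ ∘ φ`
permutes the classes, so one of its powers is equivalent to the identity and is an automorphism by
rigidity; in particular `φ` is injective.

A virtually free group is finitely presented by P. Hall's theorem on extensions. It has finitely
many conjugacy classes of finite subgroups because its Cayley graph is a quasi-tree: a finite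
subgroup `H` permutes the centers of the smallest balls containing `H`, and in a quasi-tree any two
such centers are close, so `H` is conjugate into a fixed ball around the identity.
-/

/-! ### Finite presentability -/

theorem finite_of_fg_freeGroup {X : Type*} (h : Group.FG (FreeGroup X)) : Finite X := by
  have : Group.FG (Abelianization (FreeGroup X)) :=
    Group.fg_of_surjective (f := Abelianization.of) QuotientGroup.mk_surjective
  have : AddGroup.FG (FreeAbelianGroup X) :=
    inferInstanceAs (AddGroup.FG (Additive (Abelianization (FreeGroup X))))
  have : Module.Finite ℤ (FreeAbelianGroup X) := Module.Finite.iff_addGroup_fg.2 this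
  exact Module.Finite.finite_basis (FreeAbelianGroup.basis X)

theorem finite_isFreeGroup_generators (F : Type*) [Group F] [IsFreeGroup F] [Group.FG F] :
    Finite (IsFreeGroup.Generators F) :=
  have e := IsFreeGroup.mulEquiv F
  finite_of_fg_freeGroup (Group.fg_of_surjective (f := e.symm.toMonoidHom) e.symm.surjective)

theorem normal_of_forall_conj_mem {C : Type*} [Group C] {Y : Set C}
    (hY : Subgroup.closure Y = ⊤) (H : Subgroup C)
    (hconj : ∀ y ∈ Y, ∀ h ∈ H, y * h * y⁻¹ ∈ H ∧ y⁻¹ * h * y ∈ H) : H.Normal := by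
  rw [← Subgroup.normalizer_eq_top_iff, ← top_le_iff, ← hY, Subgroup.closure_le]
  intro y hy
  refine Subgroup.mem_normalizer_iff.2 fun h => ⟨fun hh => (hconj y hy h hh).1, fun hh => ?_⟩
  simpa [mul_assoc] using (hconj y hy _ hh).2

theorem range_sup_normal {N C : Type*} [Group N] [Group C] (ι : N →* C) (K : Subgroup C)
    [K.Normal] {X : Set N} (hX : Subgroup.closure X = ⊤) {Y : Set C}
    (hY : ι.range ⊔ Subgroup.closure Y = ⊤)
    (hconj : ∀ y ∈ Y, ∀ x ∈ X, y * ι x * y⁻¹ ∈ ι.range ⊔ K ∧ y⁻¹ * ι x * y ∈ ι.range ⊔ K) :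
    (ι.range ⊔ K).Normal := by
  have conj_mem (c : C) (hc : ∀ x ∈ X, c * ι x * c⁻¹ ∈ ι.range ⊔ K) :
      ∀ h ∈ ι.range ⊔ K, c * h * c⁻¹ ∈ ι.range ⊔ K := by
    suffices ι.range ⊔ K ≤ (ι.range ⊔ K).comap (MulAut.conj c).toMonoidHom from
      fun h hh => this hh
    refine sup_le ?_ fun k hk => Subgroup.mem_sup_right (‹K.Normal›.conj_mem k hk c)
    have hX' : Subgroup.closure X ≤
        ((ι.range ⊔ K).comap (MulAut.conj c).toMonoidHom).comap ι :=
      (Subgroup.closure_le _).2 hc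
    rintro _ ⟨x, rfl⟩
    exact hX' (hX ▸ Subgroup.mem_top x)
  have hgen : Subgroup.closure ((ι.range : Set C) ∪ Y) = ⊤ := by
    rw [Subgroup.closure_union, Subgroup.closure_eq, hY]
  refine normal_of_forall_conj_mem hgen _ ?_
  rintro y (hy | hy) h hh
  · have hy' : y ∈ ι.range ⊔ K := Subgroup.mem_sup_left hy
    exact ⟨mul_mem (mul_mem hy' hh) (inv_mem hy'), mul_mem (mul_mem (inv_mem hy') hh) hy'⟩
  · refine ⟨conj_mem y (fun x hx => (hconj y hy x hx).1) h hh, ?_⟩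
    simpa using conj_mem y⁻¹ (fun x hx => by simpa using (hconj y hy x hx).2) h hh

theorem eq_ker_of_comap_le_range_sup {G C : Type*} [Group G] [Group C] {N : Subgroup G}
    {ι : N →* C} {π : C →* G} (hι : ∀ x, π (ι x) = x) {K : Subgroup C} [K.Normal]
    (hK : K ≤ π.ker) (hN : N.comap π ≤ ι.range ⊔ K) : K = π.ker := by
  refine hK.antisymm fun c hc => ?_
  have hcN : c ∈ N.comap π := by
    rw [Subgroup.mem_comap, MonoidHom.mem_ker.1 hc]
    exact N.one_mem
  obtain ⟨_, ⟨x, rfl⟩, k, hk, rfl⟩ := Subgroup.mem_sup_of_normal_right.1 (hN hcN)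
  have hx : x = 1 := by
    have := MonoidHom.mem_ker.1 hc
    rwa [map_mul, hι, MonoidHom.mem_ker.1 (hK hk), mul_one, OneMemClass.coe_eq_one] at this
  simpa [hx] using hk

theorem comap_le_of_relators_mem {G C F : Type*} [Group G] [Group C] [Group F] {N : Subgroup G}
    [N.Normal] {π : C →* G} {σ : F →* C} {S : Set F}
    (hS : ((QuotientGroup.mk' N).comp (π.comp σ)).ker = Subgroup.normalClosure S)
    {L : Subgroup C} [L.Normal] (hL : L ≤ N.comap π) (hσ : L ⊔ σ.range = ⊤)
    (hSL : ∀ s ∈ S, σ s ∈ L) : N.comap π ≤ L := by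
  intro c hc
  obtain ⟨l, hl, _, ⟨f, rfl⟩, rfl⟩ :=
    Subgroup.mem_sup_of_normal_left.1 (hσ ▸ Subgroup.mem_top c)
  have hf : f ∈ Subgroup.normalClosure S := by
    rw [← hS, MonoidHom.mem_ker]
    exact (QuotientGroup.eq_one_iff _).2 ((Subgroup.mul_mem_cancel_left _ (hL hl)).1 hc)
  exact mul_mem hl ((Subgroup.normalClosure_le_normal (N := L.comap σ) hSL) hf)

theorem exists_isFinitelyNormallyGenerated_le_ker {G C : Type*} [Group G] [Group C]
    {N : Subgroup G} {ι : N →* C} {π : C →* G} (hι : ∀ x, π (ι x) = x) {A : Set C}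
    (hA : A.Finite) (hAN : A ⊆ N.comap π) :
    ∃ K : Subgroup C, K.Normal ∧ K.IsFinitelyNormallyGenerated ∧ K ≤ π.ker ∧
      A ⊆ (ι.range ⊔ K : Subgroup C) := by
  have : Finite A := hA
  let t (a : A) : C := (ι ⟨π a, hAN a.2⟩)⁻¹ * a
  refine ⟨Subgroup.normalClosure (Set.range t), inferInstance, ⟨_, Set.finite_range t, rfl⟩,
    Subgroup.normalClosure_le_normal ?_, fun a ha => ?_⟩
  · rintro _ ⟨a, rfl⟩
    simp [t, hι, MonoidHom.mem_ker]
  · have ht : t ⟨a, ha⟩ ∈ Subgroup.normalClosure (Set.range t) :=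
      Subgroup.subset_normalClosure ⟨_, rfl⟩
    have hι' : ι ⟨π a, hAN ha⟩ ∈ ι.range := ⟨_, rfl⟩
    simpa [t] using Subgroup.mul_mem_sup hι' ht

theorem ker_isFinitelyNormallyGenerated_of_normal {G C F : Type*} [Group G] [Group C] [Group F]
    {N : Subgroup G} [N.Normal] [Group.FG N] [Group.FG F] {ι : N →* C} {π : C →* G} {σ : F →* C}
    (hι : ∀ x, π (ι x) = x) (hισ : ι.range ⊔ σ.range = ⊤)
    (hσ : ((QuotientGroup.mk' N).comp (π.comp σ)).ker.IsFinitelyNormallyGenerated) :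
    π.ker.IsFinitelyNormallyGenerated := by
  obtain ⟨X, hX, hXfin⟩ := Group.fg_iff.1 (inferInstance : Group.FG N)
  obtain ⟨Y, hY, hYfin⟩ := Group.fg_iff.1 (inferInstance : Group.FG F)
  obtain ⟨S, hSfin, hS⟩ := hσ
  let conjugates : Set C := Set.image2 (fun y x => σ y * ι x * (σ y)⁻¹) (Y ∪ Y⁻¹) X
  have hconjN : conjugates ⊆ N.comap π := by
    rintro _ ⟨y, -, x, -, rfl⟩
    simpa [hι] using ‹N.Normal›.conj_mem x x.2 (π (σ y))
  have hrelN : σ '' S ⊆ N.comap π := by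
    rintro _ ⟨s, hs, rfl⟩
    have : s ∈ ((QuotientGroup.mk' N).comp (π.comp σ)).ker :=
      hS ▸ Subgroup.subset_normalClosure hs
    exact (QuotientGroup.eq_one_iff (π (σ s))).1 this
  obtain ⟨K, hKnormal, hKfng, hKker, hK⟩ := exists_isFinitelyNormallyGenerated_le_ker hι
    (((hYfin.union hYfin.inv).image2 _ hXfin).union (hSfin.image σ))
    (Set.union_subset hconjN hrelN)
  rw [Set.union_subset_iff] at hK
  have hL : (ι.range ⊔ K).Normal := by
    refine range_sup_normal ι K hX (Y := σ '' Y) ?_ ?_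
    · rw [← MonoidHom.map_closure, hY, ← MonoidHom.range_eq_map, hισ]
    · rintro _ ⟨y, hy, rfl⟩ x hx
      exact ⟨hK.1 ⟨y, Or.inl hy, x, hx, rfl⟩,
        hK.1 ⟨y⁻¹, Or.inr (Set.inv_mem_inv.2 hy), x, hx, by simp⟩⟩
  have hLN : ι.range ⊔ K ≤ N.comap π := by
    refine sup_le ?_ (hKker.trans (Subgroup.comap_mono bot_le))
    rintro _ ⟨x, rfl⟩
    simp [hι]
  have hLσ : ι.range ⊔ K ⊔ σ.range = ⊤ := by
    rw [sup_right_comm, hισ, top_sup_eq]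
  rw [← eq_ker_of_comap_le_range_sup hι hKker
    (comap_le_of_relators_mem hS.symm hLN hLσ fun s hs => hK.2 ⟨s, hs, rfl⟩)]
  exact hKfng

/-- P. Hall's theorem. -/
theorem isFinitelyPresented_of_normal {G : Type*} [Group G] (N : Subgroup G) [N.Normal]
    [hN : Group.IsFinitelyPresented N] [hQ : Group.IsFinitelyPresented (G ⧸ N)] :
    Group.IsFinitelyPresented G := by
  obtain ⟨m, ρ, hρ, hρker⟩ := hQ.out
  obtain ⟨n, θ, hθ, -⟩ := hN.out
  have : Group.FG N := Group.fg_of_surjective hθ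
  let π : Monoid.Coprod N (FreeGroup (Fin m)) →* G :=
    Monoid.Coprod.lift N.subtype (FreeGroup.lift fun i => (ρ (FreeGroup.of i)).out)
  have hπ : (QuotientGroup.mk' N).comp (π.comp Monoid.Coprod.inr) = ρ := by
    ext i
    simp [π]
  refine Group.IsFinitelyPresented.of_surjective π (fun g => ?_)
    (ker_isFinitelyNormallyGenerated_of_normal (fun x => Monoid.Coprod.lift_apply_inl _ _ x)
      Monoid.Coprod.range_inl_sup_range_inr (by rwa [hπ]))
  obtain ⟨f, hf⟩ := hρ g
  rw [← hπ] at hf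
  obtain ⟨x, hx⟩ : ∃ x : N, π (Monoid.Coprod.inr f) * x = g :=
    ⟨⟨_, QuotientGroup.eq.1 hf⟩, by simp⟩
  exact ⟨Monoid.Coprod.inr f * Monoid.Coprod.inl x, by simp [π, ← hx]⟩

theorem VirtuallyFree.isFinitelyPresented {G : Type*} [Group G] [Group.FG G]
    (hvf : VirtuallyFree G) : Group.IsFinitelyPresented G := by
  obtain ⟨H, hH, ⟨hfree⟩⟩ := hvf
  have hcore : IsFreeGroup H.normalCore :=
    IsFreeGroup.ofMulEquiv (Subgroup.subgroupOfEquivOfLe (Subgroup.normalCore_le H))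
  have := finite_isFreeGroup_generators H.normalCore
  have : Group.IsFinitelyPresented H.normalCore := .equiv (IsFreeGroup.mulEquiv H.normalCore)
  exact isFinitelyPresented_of_normal H.normalCore

/-! ### Bottlenecks and centers in graphs -/

theorem edist_map_le {V V' : Type*} {Γ : SimpleGraph V} {Γ' : SimpleGraph V'} (f : Γ →g Γ')
    (u v : V) : Γ'.edist (f u) (f v) ≤ Γ.edist u v :=
  le_iInf fun p => by simpa using SimpleGraph.edist_le (p.map f)

theorem dist_iso_apply {V V' : Type*} {Γ : SimpleGraph V} {Γ' : SimpleGraph V'} (e : Γ ≃g Γ')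
    (u v : V) : Γ'.dist (e u) (e v) = Γ.dist u v :=
  congrArg ENat.toNat <| (edist_map_le e.toHom u v).antisymm <| by
    simpa using edist_map_le e.symm.toHom (e u) (e v)

theorem finite_setOf_dist_le {V : Type*} {Γ : SimpleGraph V} (hΓ : Γ.Connected)
    (hfin : ∀ v, (Γ.neighborSet v).Finite) (u : V) (n : ℕ) : {v | Γ.dist u v ≤ n}.Finite := by
  induction n with
  | zero => simp [hΓ.dist_eq_zero_iff]
  | succ n ih =>
    refine (ih.union (ih.biUnion fun v _ => hfin v)).subset fun v hv => ?_
    obtain ⟨p, hp⟩ := hΓ.exists_walk_length_eq_dist v u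
    cases p with
    | nil => exact Or.inl (by simp)
    | cons h q =>
      refine Or.inr (Set.mem_biUnion (?_ : Γ.dist u _ ≤ n) h.symm)
      have := SimpleGraph.dist_le q
      rw [SimpleGraph.dist_comm] at this
      rw [SimpleGraph.Walk.length_cons, SimpleGraph.dist_comm] at hp
      have : Γ.dist u v ≤ n + 1 := hv
      omega

section Bottleneck

variable {V : Type*} {Γ : SimpleGraph V}

/-- `m` is a bottleneck between `x` and `y`, up to an error `K`: from any vertex, passing through
`m` is almost no detour on the way to `x` or on the way to `y`. -/
def IsBottleneck (Γ : SimpleGraph V) (K : ℕ) (m x y : V) : Prop :=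
  ∀ z, Γ.dist z m + Γ.dist m x ≤ Γ.dist z x + K ∨ Γ.dist z m + Γ.dist m y ≤ Γ.dist z y + K

/-- Any two vertices that are far apart are separated by a bottleneck far from both of them. This
is a variant of Manning's bottleneck property, which characterizes quasi-trees. -/
def HasBottlenecks (Γ : SimpleGraph V) (K : ℕ) : Prop :=
  ∀ x y, 2 * K + 1 < Γ.dist x y → ∃ m, K < Γ.dist x m ∧ K < Γ.dist m y ∧ IsBottleneck Γ K m x y

theorem dist_add_dist_le_of_cut {β : Type*} (hΓ : Γ.Connected) (F : V → β) {K : ℕ} {m : V}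
    (hF : ∀ u v, Γ.Adj u v → F u ≠ F v → Γ.dist u m ≤ K) {z x : V} (hzx : F z ≠ F x) :
    Γ.dist z m + Γ.dist m x ≤ Γ.dist z x + 2 * K := by
  obtain ⟨p, hp⟩ := hΓ.exists_walk_length_eq_dist z x
  obtain ⟨d, hd, hdz, hdx⟩ := p.exists_boundary_dart {v | F v = F z} rfl hzx.symm
  have hcut : Γ.dist d.fst m ≤ K := hF _ _ d.adj fun h => hdx (h.symm.trans hdz)
  obtain ⟨q, r, rfl⟩ :=
    SimpleGraph.Walk.mem_support_iff_exists_append.1 (p.dart_fst_mem_support_of_mem_darts hd)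
  have hq := SimpleGraph.dist_le q
  have hr := SimpleGraph.dist_le r
  have hzm := hΓ.dist_triangle (u := z) (v := d.fst) (w := m)
  have hmx := hΓ.dist_triangle (u := m) (v := d.fst) (w := x)
  rw [SimpleGraph.dist_comm (u := m) (v := d.fst)] at hmx
  rw [SimpleGraph.Walk.length_append] at hp
  omega

theorem isBottleneck_of_cut {β : Type*} (hΓ : Γ.Connected) (F : V → β) {K : ℕ} {m : V}
    (hF : ∀ u v, Γ.Adj u v → F u ≠ F v → Γ.dist u m ≤ K) {x y : V} (hxy : F x ≠ F y) :
    IsBottleneck Γ (2 * K) m x y := by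
  intro z
  by_cases hzx : F z = F x
  · exact Or.inr (dist_add_dist_le_of_cut hΓ F hF (hzx.trans_ne hxy))
  · exact Or.inl (dist_add_dist_le_of_cut hΓ F hF hzx)

theorem exists_lt_dist_of_path (hΓ : Γ.Connected) {f : ℕ → V}
    (hf : ∀ i, Γ.dist (f i) (f (i + 1)) ≤ 1) {x y : V} {K n : ℕ}
    (hx : Γ.dist x (f 0) ≤ K) (hy : Γ.dist (f n) y ≤ K) (hxy : 2 * K + 1 < Γ.dist x y) :
    ∃ i, K < Γ.dist x (f i) ∧ K < Γ.dist (f i) y := by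
  classical
  have hex : ∃ i, K < Γ.dist x (f i) :=
    ⟨n, by have := hΓ.dist_triangle (u := x) (v := f n) (w := y); omega⟩
  obtain ⟨i, hi⟩ : ∃ i, Nat.find hex = i + 1 :=
    Nat.exists_eq_succ_of_ne_zero fun h => (h ▸ Nat.find_spec hex).not_ge hx
  have hfar : K < Γ.dist x (f (i + 1)) := hi ▸ Nat.find_spec hex
  have hnear : Γ.dist x (f i) ≤ K := not_lt.1 (Nat.find_min hex (by omega))
  refine ⟨i + 1, hfar, ?_⟩
  have hxi := hΓ.dist_triangle (u := x) (v := f i) (w := f (i + 1))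
  have hxy' := hΓ.dist_triangle (u := x) (v := f (i + 1)) (w := y)
  have := hf i
  omega

/-- The radius of the smallest ball around `v` containing `A`. -/
noncomputable def outradius (Γ : SimpleGraph V) (A : Finset V) (v : V) : ℕ :=
  A.sup fun a => Γ.dist a v

/-- `c` is a center of the smallest balls containing `A`. -/
def IsCenter (Γ : SimpleGraph V) (A : Finset V) (c : V) : Prop :=
  ∀ v, outradius Γ A c ≤ outradius Γ A v

theorem exists_isCenter [Nonempty V] (Γ : SimpleGraph V) (A : Finset V) : ∃ c, IsCenter Γ A c :=
  ⟨Function.argmin (outradius Γ A), fun v => Function.argmin_le _ v⟩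

/-- A bottleneck between two distant centers would be strictly closer to all of `A`. -/
theorem IsCenter.dist_le {K : ℕ} (hK : HasBottlenecks Γ K) {A : Finset V} (hA : A.Nonempty)
    {c c' : V} (hc : IsCenter Γ A c) (hc' : IsCenter Γ A c') : Γ.dist c c' ≤ 2 * K + 1 := by
  by_contra! hfar
  obtain ⟨m, hcm, hmc', hm⟩ := hK c c' hfar
  rw [SimpleGraph.dist_comm] at hcm
  have hcloser (a : V) (ha : a ∈ A) : Γ.dist a m < outradius Γ A c := by
    have hac : Γ.dist a c ≤ outradius Γ A c := Finset.le_sup (f := (Γ.dist · c)) ha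
    have hac' : Γ.dist a c' ≤ outradius Γ A c' := Finset.le_sup (f := (Γ.dist · c')) ha
    have := hc' c
    rcases hm a with h | h <;> omega
  obtain ⟨a, ha⟩ := hA
  exact (hc m).not_gt ((Finset.sup_lt_iff ((Nat.zero_le _).trans_lt (hcloser a ha))).2 hcloser)

theorem outradius_iso_apply (e : Γ ≃g Γ) {A : Finset V} (hA : ∀ a, e a ∈ A ↔ a ∈ A) (v : V) :
    outradius Γ A (e v) = outradius Γ A v := by
  have hdist (a : V) : Γ.dist (e.symm a) v = Γ.dist a (e v) := by
    simpa using (dist_iso_apply e (e.symm a) v).symm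
  refine (Finset.sup_le fun a ha => ?_).antisymm (Finset.sup_le fun a ha => ?_)
  · rw [← hdist]
    exact Finset.le_sup (f := (Γ.dist · v)) ((hA _).1 (by simpa using ha))
  · rw [← dist_iso_apply e]
    exact Finset.le_sup (f := (Γ.dist · (e v))) ((hA a).2 ha)

theorem IsCenter.iso_apply {A : Finset V} {c : V} (hc : IsCenter Γ A c) (e : Γ ≃g Γ)
    (hA : ∀ a, e a ∈ A ↔ a ∈ A) : IsCenter Γ A (e c) := fun v => by
  rw [outradius_iso_apply e hA]
  exact hc v

end Bottleneck

/-! ### Finite subgroups up to conjugacy -/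

/-- `𝓗` contains only finite subgroups, and at least one from each conjugacy class of them. -/
structure RepresentsFiniteSubgroups {G : Type*} [Group G] (𝓗 : Finset (Subgroup G)) : Prop where
  finite_of_mem : ∀ H ∈ 𝓗, Finite H
  exists_conj : ∀ H : Subgroup G, Finite H → ∃ K ∈ 𝓗, SubgroupConj H K

theorem exists_representsFiniteSubgroups_of_conj_subset {G : Type*} [Group G] {B : Set G}
    (hB : B.Finite) (h : ∀ H : Subgroup G, Finite H → ∃ g : G, ∀ x ∈ H, g * x * g⁻¹ ∈ B) :
    ∃ 𝓗 : Finset (Subgroup G), RepresentsFiniteSubgroups 𝓗 := by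
  have hfin : {H : Subgroup G | (H : Set G) ⊆ B}.Finite :=
    hB.finite_subsets.preimage SetLike.coe_injective.injOn
  refine ⟨hfin.toFinset, fun H hH => hB.subset (hfin.mem_toFinset.1 hH), fun H hH => ?_⟩
  obtain ⟨g, hg⟩ := h H hH
  refine ⟨_, hfin.mem_toFinset.2 ?_, g, rfl⟩
  rintro _ ⟨x, hx, rfl⟩
  exact hg x hx

section Cayley

variable {G : Type*} [Group G] {S : Set G}

/-- Left multiplication by `g` as an automorphism of a Cayley graph. -/
def mulLeftCayley (S : Set G) (g : G) :
    SimpleGraph.mulCayley S ≃g SimpleGraph.mulCayley S where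
  toEquiv := Equiv.mulLeft g
  map_rel_iff' := SimpleGraph.mulCayley_adj_mul_iff_right

theorem dist_mul_left_mulCayley (S : Set G) (g u v : G) :
    (SimpleGraph.mulCayley S).dist (g * u) (g * v) = (SimpleGraph.mulCayley S).dist u v :=
  dist_iso_apply (mulLeftCayley S g) u v

theorem dist_mulCayley_mul_le_one {s : G} (hs : s ∈ S) (u : G) :
    (SimpleGraph.mulCayley S).dist u (u * s) ≤ 1 := by
  by_cases h : u = u * s
  · simp [← h]
  · exact (SimpleGraph.dist_eq_one_iff_adj.2
      ((SimpleGraph.mulCayley_adj S _ _).2 ⟨h, Or.inl (by simpa)⟩)).le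

theorem mulCayley_connected (hS : Subgroup.closure S = ⊤) :
    (SimpleGraph.mulCayley S).Connected := by
  have hmul (s : G) (hs : s ∈ S) (u : G) : (SimpleGraph.mulCayley S).Reachable u (u * s) := by
    by_cases h : u = u * s
    · rw [← h]
    · exact ((SimpleGraph.mulCayley_adj S _ _).2 ⟨h, Or.inl (by simpa)⟩).reachable
  have hone (g : G) : (SimpleGraph.mulCayley S).Reachable 1 g := by
    induction (hS ▸ Subgroup.mem_top g : g ∈ Subgroup.closure S)
      using Subgroup.closure_induction_right with
    | one => rfl
    | mul_right x _ y hy ih => exact ih.trans (hmul y hy x)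
    | mul_inv_cancel x _ y hy ih => exact ih.trans (by simpa using (hmul y hy (x * y⁻¹)).symm)
  exact ⟨fun u v => (hone u).symm.trans (hone v)⟩

theorem finite_neighborSet_mulCayley (hS : S.Finite) (g : G) :
    ((SimpleGraph.mulCayley S).neighborSet g).Finite := by
  refine ((hS.union hS.inv).image (g * ·)).subset fun v hv => ⟨g⁻¹ * v, ?_, by simp⟩
  rcases ((SimpleGraph.mulCayley_adj S _ _).1 hv).2 with h | h
  · exact Or.inl h
  · exact Or.inr (by simpa using h)

theorem exists_representsFiniteSubgroups_of_hasBottlenecks (hfin : S.Finite)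
    (hS : Subgroup.closure S = ⊤) {K : ℕ} (hK : HasBottlenecks (SimpleGraph.mulCayley S) K) :
    ∃ 𝓗 : Finset (Subgroup G), RepresentsFiniteSubgroups 𝓗 := by
  refine exists_representsFiniteSubgroups_of_conj_subset
    (finite_setOf_dist_le (mulCayley_connected hS) (finite_neighborSet_mulCayley hfin) 1
      (2 * K + 1)) fun H hH => ?_
  have hHfin : (H : Set G).Finite := hH
  obtain ⟨c, hc⟩ := exists_isCenter (SimpleGraph.mulCayley S) hHfin.toFinset
  have hne : hHfin.toFinset.Nonempty := ⟨1, by simp⟩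
  refine ⟨c⁻¹, fun h hh => ?_⟩
  have hhc : IsCenter (SimpleGraph.mulCayley S) hHfin.toFinset (h * c) :=
    hc.iso_apply (mulLeftCayley S h) fun a => by
      change h * a ∈ _ ↔ _
      simpa using H.mul_mem_cancel_left hh
  have hdist := hc.dist_le hK hne hhc
  rw [← dist_mul_left_mulCayley S c⁻¹, inv_mul_cancel] at hdist
  simpa [mul_assoc] using hdist

end Cayley

/-! ### Cayley graphs of virtually free groups -/

section FreeGroup

variable {α : Type*}

theorem head?_invRev_ne_head?_of_isReduced_append {l₁ l₂ : List (α × Bool)}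
    (h : FreeGroup.IsReduced (l₁ ++ l₂)) (hne : l₁ ++ l₂ ≠ []) :
    (FreeGroup.invRev l₁).head? ≠ l₂.head? := by
  rw [FreeGroup.invRev, List.head?_reverse, List.getLast?_map]
  intro heq
  rcases l₁.eq_nil_or_concat with rfl | ⟨l, x, rfl⟩
  · cases l₂ <;> simp_all
  · rw [List.concat_eq_append, List.getLast?_concat, Option.map_some] at heq
    simpa using (List.isChain_append.1 h).2.2 x (by simp) _ heq.symm rfl

variable [DecidableEq α]

/-- Words with different first letters do not overlap, so `a⁻¹ * b` is reduced as written. -/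
theorem norm_le_norm_inv_mul_of_head?_ne {a b : FreeGroup α}
    (h : a.toWord.head? ≠ b.toWord.head?) : a.norm ≤ (a⁻¹ * b).norm := by
  have hred : FreeGroup.IsReduced (FreeGroup.invRev a.toWord ++ b.toWord) := by
    refine List.isChain_append.2 ⟨?_, FreeGroup.isReduced_toWord, fun x hx y hy hxy => ?_⟩
    · exact FreeGroup.toWord_inv a ▸ FreeGroup.isReduced_toWord
    · rw [FreeGroup.invRev, List.getLast?_reverse, List.head?_map, Option.mem_map] at hx
      obtain ⟨z, hz, rfl⟩ := hx
      have hne : z.2 ≠ y.2 := fun hzy => h <| by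
        rw [Option.mem_def.1 hz, Option.mem_def.1 hy, show z = y from Prod.ext hxy hzy]
      exact Bool.not_eq_eq_eq_not.2 (Bool.eq_not.2 hne)
  rw [FreeGroup.norm, FreeGroup.norm, FreeGroup.toWord_mul, FreeGroup.toWord_inv, hred.reduce_eq,
    List.length_append, FreeGroup.invRev_length]
  exact Nat.le_add_right _ _

theorem head?_toWord_inv_mk_take_ne {w : FreeGroup α} (hw : w ≠ 1) (i : ℕ) :
    (FreeGroup.mk (w.toWord.take i))⁻¹.toWord.head? ≠
      ((FreeGroup.mk (w.toWord.take i))⁻¹ * w).toWord.head? := by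
  have hred : FreeGroup.IsReduced w.toWord := FreeGroup.isReduced_toWord
  have htake : (FreeGroup.mk (w.toWord.take i)).toWord = w.toWord.take i :=
    FreeGroup.toWord_mk.trans (FreeGroup.IsReduced.reduce_eq (List.IsChain.take hred i))
  have hdrop : (FreeGroup.mk (w.toWord.take i))⁻¹ * w = FreeGroup.mk (w.toWord.drop i) := by
    rw [inv_mul_eq_iff_eq_mul, FreeGroup.mul_mk, List.take_append_drop, FreeGroup.mk_toWord]
  rw [hdrop, FreeGroup.toWord_inv, htake, FreeGroup.toWord_mk,
    FreeGroup.IsReduced.reduce_eq (List.IsChain.drop hred i)]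
  refine head?_invRev_ne_head?_of_isReduced_append ?_ ?_ <;> rw [List.take_append_drop]
  · exact hred
  · rwa [Ne, FreeGroup.toWord_eq_nil_iff]

theorem norm_inv_mk_take_mul_mk_take_le_one (l : List (α × Bool)) (i : ℕ) :
    ((FreeGroup.mk (l.take i))⁻¹ * FreeGroup.mk (l.take (i + 1))).norm ≤ 1 := by
  rw [List.take_add_one, ← FreeGroup.mul_mk, inv_mul_cancel_left]
  refine FreeGroup.norm_mk_le.trans ?_
  cases l[i]? <;> simp

/-- The graph `Γ` is quasi-isometric to the tree of `FreeGroup α`, through the maps `r` and `e`. A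
prefix `p` of the reduced word from `r x` to `r y` gives the bottleneck `e p`: the first letter of
`p⁻¹ * r v`, as a function of `v`, separates `x` from `y` and changes only near `e p`. -/
theorem hasBottlenecks_of_freeGroup {V : Type*} {Γ : SimpleGraph V} (hΓ : Γ.Connected)
    {r : V → FreeGroup α} {e : FreeGroup α → V} {C M : ℕ}
    (he : ∀ a b, Γ.dist (e a) (e b) ≤ (a⁻¹ * b).norm) (hC : ∀ v, Γ.dist v (e (r v)) ≤ C)
    (hM : ∀ u v, Γ.Adj u v → ((r u)⁻¹ * r v).norm ≤ M) : HasBottlenecks Γ (2 * (C + M)) := by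
  intro x y hxy
  let w : FreeGroup α := (r x)⁻¹ * r y
  let p (i : ℕ) : FreeGroup α := r x * FreeGroup.mk (w.toWord.take i)
  have hx : Γ.dist x (e (p 0)) ≤ C := by
    simpa [p, ← FreeGroup.one_eq_mk] using hC x
  have hy : Γ.dist (e (p w.toWord.length)) y ≤ C := by
    simpa [p, w, FreeGroup.mk_toWord, SimpleGraph.dist_comm] using hC y
  have hp (i : ℕ) : Γ.dist (e (p i)) (e (p (i + 1))) ≤ 1 := by
    refine (he _ _).trans ?_
    simpa [p, mul_assoc] using norm_inv_mk_take_mul_mk_take_le_one w.toWord i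
  have hw : w ≠ 1 := fun hw => by
    have hr : r x = r y := inv_mul_eq_one.1 hw
    have := hC x
    have := hC y
    rw [SimpleGraph.dist_comm, ← hr] at this
    have := hΓ.dist_triangle (u := x) (v := e (r x)) (w := y)
    omega
  obtain ⟨i, hxi, hiy⟩ := exists_lt_dist_of_path hΓ (K := 2 * (C + M)) hp (by omega)
    (hy.trans (by omega)) hxy
  refine ⟨e (p i), hxi, hiy,
    isBottleneck_of_cut hΓ (fun v => ((p i)⁻¹ * r v).toWord.head?) (fun u v huv hne => ?_) ?_⟩
  · have hu : ((r u)⁻¹ * p i).norm ≤ M := by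
      have := norm_le_norm_inv_mul_of_head?_ne hne
      rw [← FreeGroup.norm_inv_eq] at this
      simpa [mul_assoc] using this.trans (by simpa [mul_assoc] using hM u v huv)
    exact hΓ.dist_triangle.trans (add_le_add (hC u) ((he _ _).trans hu))
  · simpa [p, w, mul_assoc] using head?_toWord_inv_mk_take_ne hw i

end FreeGroup

section FreeSubgroup

variable {G : Type*} [Group G]

theorem closure_union_eq_top_of_isComplement {H : Subgroup G} {A T : Set G}
    (hA : Subgroup.closure A = H) (hHT : Subgroup.IsComplement (H : Set G) T) :
    Subgroup.closure (A ∪ T) = ⊤ := by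
  refine (Subgroup.eq_top_iff' _).2 fun g => ?_
  rw [← hHT.equiv_fst_mul_equiv_snd g]
  refine mul_mem (Subgroup.closure_mono Set.subset_union_left ?_)
    (Subgroup.subset_closure (Or.inr (hHT.equiv g).2.2))
  exact hA ▸ (hHT.equiv g).1.2

theorem closure_range_comp_of {α : Type*} (f : FreeGroup α →* G) :
    Subgroup.closure (Set.range fun i => f (FreeGroup.of i)) = f.range := by
  rw [MonoidHom.range_eq_map, ← FreeGroup.closure_range_of, MonoidHom.map_closure,
    ← Set.range_comp]
  rfl

theorem dist_mulCayley_le_norm {α : Type*} [DecidableEq α] {S : Set G}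
    (hS : Subgroup.closure S = ⊤) (f : FreeGroup α →* G) (hf : ∀ i, f (FreeGroup.of i) ∈ S)
    (a b : FreeGroup α) :
    (SimpleGraph.mulCayley S).dist (f a) (f b) ≤ (a⁻¹ * b).norm := by
  have hletter (p : α × Bool) : (SimpleGraph.mulCayley S).dist 1 (f (FreeGroup.mk [p])) ≤ 1 := by
    obtain ⟨i, _ | _⟩ := p
    · have hinv : f (FreeGroup.mk [(i, false)]) = (f (FreeGroup.of i))⁻¹ := by
        rw [← map_inv, FreeGroup.of, FreeGroup.inv_mk]
        rfl
      rw [hinv, SimpleGraph.dist_comm]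
      simpa using dist_mulCayley_mul_le_one (hf i) (f (FreeGroup.of i))⁻¹
    · simpa [FreeGroup.of] using dist_mulCayley_mul_le_one (hf i) 1
  have hone (l : List (α × Bool)) :
      (SimpleGraph.mulCayley S).dist 1 (f (FreeGroup.mk l)) ≤ l.length := by
    induction l with
    | nil => simp [← FreeGroup.one_eq_mk]
    | cons p l ih =>
      rw [← List.singleton_append, ← FreeGroup.mul_mk, map_mul,
        List.length_append, List.length_singleton]
      refine ((mulCayley_connected hS).dist_triangle (v := f (FreeGroup.mk [p]))).trans
        (add_le_add (hletter p) (le_of_eq_of_le ?_ ih))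
      simpa using dist_mul_left_mulCayley S (f (FreeGroup.mk [p])) 1 (f (FreeGroup.mk l))
  rw [← dist_mul_left_mulCayley S (f a)⁻¹]
  simpa [FreeGroup.mk_toWord, FreeGroup.norm] using hone (a⁻¹ * b).toWord

theorem exists_hasBottlenecks_of_freeGroup {α : Type*} [Finite α] {f : FreeGroup α →* G}
    (hf : Function.Injective f) [f.range.FiniteIndex] :
    ∃ S : Set G, S.Finite ∧ Subgroup.closure S = ⊤ ∧
      ∃ K, HasBottlenecks (SimpleGraph.mulCayley S) K := by
  classical
  obtain ⟨T, hHT, -⟩ := f.range.exists_isComplement_right 1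
  have hTfin : T.Finite := hHT.finite_right
  let S : Set G := (Set.range fun i => f (FreeGroup.of i)) ∪ T
  have hSfin : S.Finite := (Set.finite_range _).union hTfin
  have hS : Subgroup.closure S = ⊤ :=
    closure_union_eq_top_of_isComplement (closure_range_comp_of f) hHT
  let r (g : G) : FreeGroup α := (MonoidHom.ofInjective hf).symm (hHT.equiv g).1
  have hr (g : G) : f (r g) * (hHT.equiv g).2 = g := by
    rw [MonoidHom.apply_ofInjective_symm, hHT.equiv_fst_mul_equiv_snd]
  have hr_mul (a : FreeGroup α) (g : G) : r (f a * g) = a * r g := by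
    apply hf
    simp only [r, map_mul, MonoidHom.apply_ofInjective_symm]
    rw [hHT.equiv_mul_left_of_mem ⟨a, rfl⟩, Subgroup.coe_mul]
  obtain ⟨M, hM⟩ : ∃ M, ∀ t ∈ T, ∀ s ∈ S, (r (t * s)).norm ≤ M := by
    obtain ⟨M, hM⟩ := ((hTfin.image2 (fun t s => (r (t * s)).norm) hSfin)).bddAbove
    exact ⟨M, fun t ht s hs => hM ⟨t, ht, s, hs, rfl⟩⟩
  have hr_step (u : G) (s : G) (hs : s ∈ S) : ((r u)⁻¹ * r (u * s)).norm ≤ M := by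
    have : r (u * s) = r u * r ((hHT.equiv u).2 * s) := by
      rw [← hr_mul, ← mul_assoc, hr]
    rw [this, inv_mul_cancel_left]
    exact hM _ (hHT.equiv u).2.2 s hs
  refine ⟨S, hSfin, hS, _, hasBottlenecks_of_freeGroup (mulCayley_connected hS) (r := r) (e := f)
    (C := 1) (M := M) (dist_mulCayley_le_norm hS f fun i => Or.inl ⟨i, rfl⟩) (fun g => ?_)
    fun u v huv => ?_⟩
  · rw [SimpleGraph.dist_comm]
    have := dist_mulCayley_mul_le_one (S := S) (Or.inr (hHT.equiv g).2.2) (f (r g))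
    rwa [hr] at this
  · rcases ((SimpleGraph.mulCayley_adj S _ _).1 huv).2 with h | h
    · simpa using hr_step u _ h
    · rw [← FreeGroup.norm_inv_eq]
      simpa using hr_step v _ h

end FreeSubgroup

theorem VirtuallyFree.exists_representsFiniteSubgroups {G : Type*} [Group G] [Group.FG G]
    (hvf : VirtuallyFree G) : ∃ 𝓗 : Finset (Subgroup G), RepresentsFiniteSubgroups 𝓗 := by
  obtain ⟨H, hH, ⟨hfree⟩⟩ := hvf
  let e := IsFreeGroup.mulEquiv H
  have := finite_isFreeGroup_generators H
  let f : FreeGroup (IsFreeGroup.Generators H) →* G := H.subtype.comp e.toMonoidHom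
  have hf : Function.Injective f := H.subtype_injective.comp e.injective
  have hrange : f.range = H := by
    rw [MonoidHom.range_comp, MonoidHom.range_eq_top.2 e.surjective, ← MonoidHom.range_eq_map,
      H.range_subtype]
  have : f.range.FiniteIndex := by rwa [hrange]
  obtain ⟨S, hSfin, hS, K, hK⟩ := exists_hasBottlenecks_of_freeGroup hf
  exact exists_representsFiniteSubgroups_of_hasBottlenecks hSfin hS hK

/-! ### Transfer of homomorphisms -/

section Logic

variable {α : Type*} {n : ℕ}

/-- The term of the language of groups that spells a word in the terms `t i` and their inverses;
the letter `(i, false)` stands for the inverse of `t i`, as in `FreeGroup`. -/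
def wordTerm {ι : Type*} (t : ι → groupLang.Term α) : List (ι × Bool) → groupLang.Term α
  | [] => Term.func GroupFunc.one ![]
  | (i, true) :: l => Term.func GroupFunc.mul ![t i, wordTerm t l]
  | (i, false) :: l => Term.func GroupFunc.mul ![Term.func GroupFunc.inv ![t i], wordTerm t l]

theorem realize_wordTerm {ι M : Type*} [Group M] (t : ι → groupLang.Term α) (v : α → M)
    (l : List (ι × Bool)) :
    (wordTerm t l).realize v = FreeGroup.lift (fun i => (t i).realize v) (FreeGroup.mk l) := by
  induction l with
  | nil => rfl
  | cons p l ih =>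
    rw [FreeGroup.lift_mk] at ih ⊢
    obtain ⟨i, _ | _⟩ := p <;> simp only [List.map_cons, List.prod_cons, ← ih] <;> rfl

theorem isQF_iSup {β : Type*} [Finite β] {f : β → groupLang.BoundedFormula α n}
    (hf : ∀ b, (f b).IsQF) : (BoundedFormula.iSup f).IsQF := by
  let _ := Fintype.ofFinite β
  change BoundedFormula.IsQF (List.foldr _ _ (List.map f (Finset.univ : Finset β).toList))
  induction (Finset.univ : Finset β).toList with
  | nil => exact BoundedFormula.isQF_bot
  | cons b l ih => exact (hf b).sup ih

theorem isQF_iInf {β : Type*} [Finite β] {f : β → groupLang.BoundedFormula α n}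
    (hf : ∀ b, (f b).IsQF) : (BoundedFormula.iInf f).IsQF := by
  let _ := Fintype.ofFinite β
  change BoundedFormula.IsQF (List.foldr _ _ (List.map f (Finset.univ : Finset β).toList))
  induction (Finset.univ : Finset β).toList with
  | nil => exact BoundedFormula.IsQF.top
  | cons b l ih => exact (hf b).inf ih

theorem isAE_alls {φ : groupLang.BoundedFormula α n} (hφ : IsAE φ) : IsAE φ.alls := by
  induction n with
  | zero => exact hφ
  | succ n ih => exact ih (IsAE.all hφ)

/-- The equation `u = v` between two words in `n` variables. -/
noncomputable def wordEq (u v : FreeGroup (Fin n)) : groupLang.BoundedFormula Empty n :=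
  (wordTerm (fun i => Term.var (Sum.inr i)) u.toWord).bdEqual
    (wordTerm (fun i => Term.var (Sum.inr i)) v.toWord)

theorem isQF_wordEq (u v : FreeGroup (Fin n)) : (wordEq u v).IsQF :=
  (BoundedFormula.IsAtomic.equal _ _).isQF

theorem realize_wordEq {M : Type*} [Group M] (u v : FreeGroup (Fin n)) (w : Empty → M)
    (x : Fin n → M) :
    (wordEq u v).Realize w x ↔ FreeGroup.lift x u = FreeGroup.lift x v := by
  simp [wordEq, realize_wordTerm, FreeGroup.mk_toWord]

theorem lift_snoc_map_castSucc {M : Type*} [Group M] (x : Fin n → M) (g : M)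
    (w : FreeGroup (Fin n)) :
    FreeGroup.lift (Fin.snoc (α := fun _ => M) x g) (FreeGroup.map Fin.castSucc w) =
      FreeGroup.lift x w := by
  have : (FreeGroup.lift (Fin.snoc (α := fun _ => M) x g)).comp (FreeGroup.map Fin.castSucc) =
      FreeGroup.lift x := by
    ext i
    simp
  exact DFunLike.congr_fun this w

variable (R : Set (FreeGroup (Fin n))) [Finite R] {ι : Type*} [Finite ι] {κ : ι → Type*}
  [∀ i, Finite (κ i)] (u v : ∀ i, κ i → FreeGroup (Fin n))

/-- The sentence saying that, for every solution of the system of equations `R`, there is an `i`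
such that the values of the tuples of words `u i` and `v i` are conjugate. The conjugating element
is the last variable. -/
noncomputable def conjSentence : groupLang.Sentence :=
  (BoundedFormula.iSup (fun w : R => (wordEq (FreeGroup.map Fin.castSucc w.1) 1).not) ⊔
    BoundedFormula.iSup fun i => BoundedFormula.iInf fun k => wordEq
      (FreeGroup.of (Fin.last n) * FreeGroup.map Fin.castSucc (u i k) *
        (FreeGroup.of (Fin.last n))⁻¹)
      (FreeGroup.map Fin.castSucc (v i k))).ex.alls

theorem isAE_conjSentence : IsAE (conjSentence R u v) :=
  isAE_alls <| .of_existential <| .ex <| .of_isQF <|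
    (isQF_iSup fun _ => (isQF_wordEq _ _).not).sup
      (isQF_iSup fun _ => isQF_iInf fun _ => isQF_wordEq _ _)

theorem realize_conjSentence (M : Type*) [Group M] :
    M ⊨ conjSentence R u v ↔ ∀ x : Fin n → M, (∀ w ∈ R, FreeGroup.lift x w = 1) →
      ∃ i, ∃ g : M, ∀ k, g * FreeGroup.lift x (u i k) * g⁻¹ = FreeGroup.lift x (v i k) := by
  rw [Sentence.Realize, conjSentence, BoundedFormula.realize_alls]
  refine forall_congr' fun x => ?_
  simp only [BoundedFormula.realize_ex, BoundedFormula.realize_sup, BoundedFormula.realize_iSup,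
    BoundedFormula.realize_iInf, BoundedFormula.realize_not, realize_wordEq, map_mul, map_inv,
    map_one, lift_snoc_map_castSucc, FreeGroup.lift_apply_of, Fin.snoc_last, exists_or,
    exists_const, Subtype.exists, exists_prop]
  rw [exists_comm, or_iff_not_imp_left]
  simp only [not_exists, not_and, not_not]

end Logic

theorem exists_hom_of_relators {F G G' : Type*} [Group F] [Group G] [Group G'] {π : F →* G}
    (hπ : Function.Surjective π) {R : Set F} (hR : Subgroup.normalClosure R = π.ker)
    (f : F →* G') (hf : ∀ w ∈ R, f w = 1) : ∃ φ : G →* G', φ.comp π = f :=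
  ⟨π.liftOfSurjective hπ ⟨f, hR ▸ Subgroup.normalClosure_le_normal hf⟩,
    π.liftOfRightInverse_comp _ _ _⟩

theorem exists_hom_not_conj {G G' : Type*} [Group G] [Group G'] [hG : Group.IsFinitelyPresented G]
    (hae : ∀ σ : groupLang.Sentence, IsAE σ → G' ⊨ σ → G ⊨ σ)
    {ι : Type*} [Finite ι] {κ : ι → Type*} [∀ i, Finite (κ i)] {a b : ∀ i, κ i → G}
    (hab : ∀ i, ¬ ∃ g : G, ∀ k, g * a i k * g⁻¹ = b i k) :
    ∃ φ : G →* G', ∀ i, ¬ ∃ g : G', ∀ k, g * φ (a i k) * g⁻¹ = φ (b i k) := by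
  obtain ⟨n, π, hπ, R, hRfin, hR⟩ := hG.out
  have : Finite R := hRfin
  have hlift : FreeGroup.lift (fun j => π (FreeGroup.of j)) = π := by
    ext j
    simp
  choose word hword using hπ
  let u i k := word (a i k)
  let v i k := word (b i k)
  have hG : ¬ G ⊨ conjSentence R u v := by
    rw [realize_conjSentence]
    intro hall
    obtain ⟨i, g, hg⟩ := hall (fun j => π (FreeGroup.of j)) fun w hw => by
      rw [hlift, ← MonoidHom.mem_ker, ← hR]
      exact Subgroup.subset_normalClosure hw
    exact hab i ⟨g, fun k => by simpa only [hlift, u, v, hword] using hg k⟩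
  have hG' := mt (hae _ (isAE_conjSentence R u v)) hG
  rw [realize_conjSentence] at hG'
  push Not at hG'
  obtain ⟨x, hx, hconj⟩ := hG'
  obtain ⟨φ, hφ⟩ := exists_hom_of_relators (fun g => ⟨word g, hword g⟩) hR (FreeGroup.lift x) hx
  have hφ (g : G) : φ g = FreeGroup.lift x (word g) := by
    rw [← hφ, MonoidHom.comp_apply, hword]
  refine ⟨φ, fun i ⟨g, hg⟩ => ?_⟩
  obtain ⟨k, hk⟩ := hconj i g
  exact hk (by simpa only [hφ] using hg k)

/-! ### Conjugacy classes of homomorphisms -/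

section HomConjClasses

variable {K G G' G'' : Type*} [Group K] [Group G] [Group G'] [Group G'']

/-- Conjugacy of homomorphisms under inner automorphisms of the target. -/
def homConjSetoid (K G : Type*) [Group K] [Group G] : Setoid (K →* G) where
  r θ₁ θ₂ := ∃ g : G, ∀ k, g * θ₁ k * g⁻¹ = θ₂ k
  iseqv :=
    { refl := fun θ => ⟨1, by simp⟩
      symm := fun ⟨g, hg⟩ => ⟨g⁻¹, fun k => by rw [← hg]; group⟩
      trans := fun ⟨g, hg⟩ ⟨h, hh⟩ => ⟨h * g, fun k => by rw [← hh, ← hg]; group⟩ }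

/-- Homomorphisms `K → G` up to conjugacy in `G`. For finite `K` these are the data that `HomEquiv`
compares. -/
def HomConjClasses (K G : Type*) [Group K] [Group G] : Type _ :=
  Quotient (homConjSetoid K G)

namespace HomConjClasses

/-- The conjugacy class of a homomorphism. -/
def mk (θ : K →* G) : HomConjClasses K G :=
  Quotient.mk _ θ

theorem mk_surjective : Function.Surjective (mk : (K →* G) → HomConjClasses K G) :=
  Quotient.mk_surjective

theorem mk_eq_mk {θ₁ θ₂ : K →* G} : mk θ₁ = mk θ₂ ↔ ∃ g : G, ∀ k, g * θ₁ k * g⁻¹ = θ₂ k :=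
  Quotient.eq (r := homConjSetoid K G)

/-- Composition with a homomorphism on conjugacy classes. -/
def map (φ : G →* G') : HomConjClasses K G → HomConjClasses K G' :=
  Quotient.map φ.comp fun _ _ ⟨g, hg⟩ => ⟨φ g, fun k => by simp [← hg]⟩

theorem map_comp (ψ : G' →* G'') (φ : G →* G') (c : HomConjClasses K G) :
    map (ψ.comp φ) c = map ψ (map φ c) := by
  obtain ⟨θ, rfl⟩ := mk_surjective c
  rfl

theorem iterate_map_mk (φ : G →* G) (n : ℕ) (θ : K →* G) :
    (map φ)^[n] (mk θ) = mk ((homPow φ n).comp θ) := by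
  induction n with
  | zero => rfl
  | succ n ih => rw [Function.iterate_succ_apply', ih]; rfl

end HomConjClasses

theorem RepresentsFiniteSubgroups.finite_homConjClasses {𝓗 : Finset (Subgroup G)}
    (h𝓗 : RepresentsFiniteSubgroups 𝓗) [Finite K] : Finite (HomConjClasses K G) := by
  have (H : 𝓗) : Finite H.1 := h𝓗.finite_of_mem H H.2
  have (H : 𝓗) : Finite (K →* H.1) := DFunLike.finite _
  refine Finite.of_surjective
    (fun θ : Σ H : 𝓗, K →* H.1 => HomConjClasses.mk (θ.1.1.subtype.comp θ.2)) fun c => ?_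
  obtain ⟨θ, rfl⟩ := HomConjClasses.mk_surjective c
  obtain ⟨H, hH, g, rfl⟩ := h𝓗.exists_conj θ.range (Set.finite_range θ)
  refine ⟨⟨⟨_, hH⟩, ((MulAut.conj g).toMonoidHom.comp θ).codRestrict _ fun k =>
    ⟨θ k, ⟨k, rfl⟩, rfl⟩⟩, HomConjClasses.mk_eq_mk.2 ⟨g⁻¹, fun k => ?_⟩⟩
  change g⁻¹ * (g * θ k * g⁻¹) * g⁻¹⁻¹ = θ k
  group

theorem RepresentsFiniteSubgroups.homEquiv {𝓗 : Finset (Subgroup G)}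
    (h𝓗 : RepresentsFiniteSubgroups 𝓗) {φ φ' : G →* G'}
    (h : ∀ H ∈ 𝓗, HomConjClasses.mk (φ.comp H.subtype) = .mk (φ'.comp H.subtype)) :
    HomEquiv φ φ' := by
  intro H hH
  obtain ⟨_, hK, c, rfl⟩ := h𝓗.exists_conj H hH
  obtain ⟨g, hg⟩ := HomConjClasses.mk_eq_mk.1 (h _ hK)
  refine ⟨(φ' c)⁻¹ * g * φ c, fun x hx => ?_⟩
  have hconj : g * φ (c * x * c⁻¹) * g⁻¹ = φ' (c * x * c⁻¹) := hg ⟨_, x, hx, rfl⟩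
  calc φ' x = (φ' c)⁻¹ * φ' (c * x * c⁻¹) * φ' c := by simp [mul_assoc]
    _ = (φ' c)⁻¹ * g * φ c * φ x * ((φ' c)⁻¹ * g * φ c)⁻¹ := by
      rw [← hconj]
      simp [mul_assoc]

theorem homPow_apply (φ : G →* G) (n : ℕ) (g : G) : homPow φ n g = φ^[n] g := by
  induction n with
  | zero => rfl
  | succ n ih => rw [Function.iterate_succ_apply', ← ih]; rfl

/-- An injective self-map of a finite set is a permutation, so the tuple of classes of the
inclusions `H → G` is periodic under composition with `φ`. -/
theorem RepresentsFiniteSubgroups.classPermuting {𝓗 : Finset (Subgroup G)}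
    (h𝓗 : RepresentsFiniteSubgroups 𝓗) {φ : G →* G}
    (hφ : ∀ H ∈ 𝓗, Function.Injective (HomConjClasses.map φ : HomConjClasses H G → _)) :
    ClassPermuting φ := by
  have (H : 𝓗) : Finite (HomConjClasses H.1 G) :=
    have := h𝓗.finite_of_mem H H.2
    h𝓗.finite_homConjClasses
  let F : (∀ H : 𝓗, HomConjClasses H.1 G) → ∀ H : 𝓗, HomConjClasses H.1 G :=
    Pi.map fun _ => HomConjClasses.map φ
  have hF : Function.Injective F := Function.Injective.piMap fun H => hφ H H.2
  obtain ⟨n, hn, hper⟩ := Function.mem_periodicPts.1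
    (hF.mem_periodicPts fun H => HomConjClasses.mk H.1.subtype)
  refine ⟨n, hn, h𝓗.homEquiv fun H hH => ?_⟩
  have hH := congrFun hper.eq ⟨H, hH⟩
  rw [Pi.map_iterate, Pi.map_apply, HomConjClasses.iterate_map_mk] at hH
  exact hH

theorem exists_hom_injOn_map [Group.IsFinitelyPresented G]
    (hae : ∀ σ : groupLang.Sentence, IsAE σ → G' ⊨ σ → G ⊨ σ)
    {ι : Type*} [Finite ι] {L : ι → Type*} [∀ i, Group (L i)] [∀ i, Finite (L i)]
    {S : ∀ i, Set (HomConjClasses (L i) G)} (hS : ∀ i, (S i).Finite) :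
    ∃ φ : G →* G', ∀ i, Set.InjOn (HomConjClasses.map φ) (S i) := by
  have (i : ι) : Finite (S i) := hS i
  choose rep hrep using fun i => HomConjClasses.mk_surjective (K := L i) (G := G)
  obtain ⟨φ, hφ⟩ := exists_hom_not_conj (G' := G') hae
    (ι := Σ i, {c : S i × S i // c.1 ≠ c.2}) (a := fun p => rep p.1 p.2.1.1)
    (b := fun p => rep p.1 p.2.1.2) fun p => by
      rw [← HomConjClasses.mk_eq_mk, hrep, hrep]
      exact Subtype.coe_injective.ne p.2.2
  refine ⟨φ, fun i c hc d hd hcd => by_contra fun hne => hφ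
    ⟨i, (⟨c, hc⟩, ⟨d, hd⟩), fun h => hne (congrArg Subtype.val h)⟩ ?_⟩
  rw [← hrep i c, ← hrep i d] at hcd
  exact HomConjClasses.mk_eq_mk.1 hcd

end HomConjClasses

theorem injective_of_bijective_homPow_comp {G G' : Type*} [Group G] [Group G'] {φ : G →* G'}
    {ψ : G' →* G} {n : ℕ} (hn : 1 ≤ n) (h : Function.Bijective (homPow (ψ.comp φ) n)) :
    Function.Injective φ := by
  obtain ⟨m, rfl⟩ := Nat.exists_eq_add_of_le' hn
  have hinj : Function.Injective ((ψ.comp φ)^[m] ∘ ψ.comp φ) := by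
    simpa only [funext (homPow_apply (ψ.comp φ) (m + 1)), Function.iterate_succ] using h.injective
  exact Function.Injective.of_comp (f := ψ) hinj.of_comp

theorem rigid_aeEquivalent_embeds_general
    (G : Type*) (G' : Type*) [Group G] [Group G']
    [Group.IsFinitelyPresented G] [Group.IsFinitelyPresented G']
    {𝓗 : Finset (Subgroup G)} (h𝓗 : RepresentsFiniteSubgroups 𝓗)
    (hrigid : Rigid G) (hae : AEEquivalent G G') :
    ∃ ψ : G →* G', Function.Injective ψ := by
  have (H : 𝓗) : Finite H.1 := h𝓗.finite_of_mem H H.2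
  have (H : 𝓗) : Finite (HomConjClasses H.1 G) := h𝓗.finite_homConjClasses
  obtain ⟨φ, hφ⟩ := exists_hom_injOn_map (G := G) (G' := G') (fun σ hσ => (hae σ hσ).2)
    fun H : 𝓗 => (Set.univ : Set (HomConjClasses H.1 G)).toFinite
  obtain ⟨ψ, hψ⟩ := exists_hom_injOn_map (G := G') (G' := G) (fun σ hσ => (hae σ hσ).1)
    fun H : 𝓗 => Set.finite_range (HomConjClasses.map φ : HomConjClasses H.1 G → _)
  have hperm : ClassPermuting (ψ.comp φ) := h𝓗.classPermuting fun H hH c d hcd => by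
    rw [HomConjClasses.map_comp, HomConjClasses.map_comp] at hcd
    exact hφ ⟨H, hH⟩ trivial trivial (hψ ⟨H, hH⟩ ⟨c, rfl⟩ ⟨d, rfl⟩ hcd)
  obtain ⟨n, hn, hequiv⟩ := hperm
  exact ⟨φ, injective_of_bijective_homPow_comp hn (hrigid _ hequiv)⟩

/-- If `G` is a rigid finitely generated virtually free group, `G'` is a finitely
generated virtually free group and `G` and `G'` are ∀∃-equivalent, then `G`
embeds into `G'`. -/
theorem rigid_aeEquivalent_embeds
    (G : Type*) (G' : Type*) [Group G] [Group G']
    (hfg : Group.FG G) (hfg' : Group.FG G')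
    (hvf : VirtuallyFree G) (hvf' : VirtuallyFree G')
    (hrigid : Rigid G) (hae : AEEquivalent G G') :
    ∃ ψ : G →* G', Function.Injective ψ := by
  have := hvf.isFinitelyPresented
  have := hvf'.isFinitelyPresented
  obtain ⟨𝓗, h𝓗⟩ := hvf.exists_representsFiniteSubgroups
  exact rigid_aeEquivalent_embeds_general G G' h𝓗 hrigid hae
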